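/- arXiv:math/9909183 — 4 statements merged into one kernel-verified Lean document; each statement's English description precedes it below -/
import Mathlib

section
/- The Heisenberg operators act irreducibly on S: if U ⊆ S is a ℂ-linear subspace with h(n)(U) ⊆ U for every n ∈ ℤ and U ≠ {0}, then U = S. -/
/-!
In characteristic zero a nonconstant polynomial has a nonzero partial derivative, and every nonzero
partial derivative has smaller total degree. So a nonzero element of least total degree of a
subspace stable under differentiation is a constant, and from `1` multiplication by the variables
produces every polynomial.
-/

noncomputable section

/-- The polynomial algebra `S = ℂ[a₁,a₂,a₃,…]`, with variables indexed by `ℕ+`. -/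
abbrev SS : Type := MvPolynomial ℕ+ ℂ

/-- The Heisenberg operators `h(n)` on `S`: for `n < 0`, multiplication by `a₋ₙ`;
for `n > 0`, `n·∂/∂aₙ`; and `h(0) = 0`. -/
noncomputable def hOp (n : ℤ) : Module.End ℂ SS :=
  if _h1 : 0 < n then
    (n : ℂ) • (MvPolynomial.pderiv (R := ℂ) (⟨n.toNat, by omega⟩ : ℕ+)).toLinearMap
  else if _h2 : n < 0 then
    LinearMap.mulLeft ℂ (MvPolynomial.X (⟨(-n).toNat, by omega⟩ : ℕ+))
  else 0

/-- The normally ordered product `:h(i)h(j):`  (equal to `h(i)∘h(j)` if `i ≤ j`,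
and to `h(j)∘h(i)` if `i > j`; note `f * g` is composition in `Module.End`). -/
noncomputable def nord (i j : ℤ) : Module.End ℂ SS :=
  if i ≤ j then hOp i * hOp j else hOp j * hOp i

open MvPolynomial

section Derivatives

variable {σ R : Type*} [CommSemiring R] {p : MvPolynomial σ R}

theorem totalDegree_pderiv_lt {i : σ} (h : pderiv i p ≠ 0) :
    (pderiv i p).totalDegree < p.totalDegree := by
  obtain ⟨k, hk, hdeg⟩ :=
    (pderiv i p).support.exists_mem_eq_sup (support_nonempty.mpr h) Finsupp.degree
  have hk' : k + Finsupp.single i 1 ∈ p.support := by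
    rw [mem_support_iff, coeff_pderiv] at hk
    exact mem_support_iff.mpr (left_ne_zero_of_mul hk)
  calc (pderiv i p).totalDegree = k.degree := hdeg
    _ < (k + Finsupp.single i 1).degree := by
      rw [map_add, Finsupp.degree_single]
      exact Nat.lt_succ_self _
    _ ≤ p.totalDegree := le_totalDegree hk'

theorem eq_C_of_forall_pderiv_eq_zero [IsAddTorsionFree R] (h : ∀ i, pderiv i p = 0) :
    p = C (coeff 0 p) := by
  classical
  ext m
  rw [coeff_C]
  split_ifs with hm
  · rw [hm]
  obtain ⟨i, hi⟩ := Finsupp.ne_iff.mp (Ne.symm hm)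
  obtain ⟨k, rfl⟩ : ∃ k, m = k + Finsupp.single i 1 :=
    le_iff_exists_add'.mp (Finsupp.single_le_iff.mpr (Nat.one_le_iff_ne_zero.mpr hi))
  have hcoeff : (k i + 1) • coeff (k + Finsupp.single i 1) p = 0 := by
    rw [nsmul_eq_mul, mul_comm, Nat.cast_succ, ← coeff_pderiv, h, coeff_zero]
  exact (nsmul_eq_zero_iff_right (k i).succ_ne_zero).mp hcoeff

end Derivatives

section InvariantSubspaces

variable {σ R K : Type*}

theorem one_mem_of_pderiv_mem [Semifield K] [CharZero K] {U : Submodule K (MvPolynomial σ K)}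
    (hpderiv : ∀ i, ∀ p ∈ U, pderiv i p ∈ U) (hne : U ≠ ⊥) : (1 : MvPolynomial σ K) ∈ U := by
  obtain ⟨p, ⟨hp, hp0⟩, hmin⟩ :=
    exists_minimalFor_of_wellFoundedLT (fun p ↦ p ∈ U ∧ p ≠ 0) totalDegree (U.ne_bot_iff.mp hne)
  have hconst : p = C (coeff 0 p) := by
    refine eq_C_of_forall_pderiv_eq_zero fun i ↦ ?_
    by_contra hi
    have hlt := totalDegree_pderiv_lt hi
    exact hlt.not_ge (hmin ⟨hpderiv i p hp, hi⟩ hlt.le)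
  have hc : coeff 0 p ≠ 0 := fun h ↦ hp0 (by rw [hconst, h, C_0])
  rwa [hconst, ← mul_one (C _), ← smul_eq_C_mul, U.smul_mem_iff hc] at hp

theorem eq_top_of_one_mem_of_X_mul_mem [CommSemiring R] {U : Submodule R (MvPolynomial σ R)}
    (hone : 1 ∈ U) (hX : ∀ i, ∀ p ∈ U, X i * p ∈ U) : U = ⊤ := by
  refine U.eq_top_iff'.mpr fun p ↦ ?_
  induction p using MvPolynomial.induction_on with
  | C a => simpa only [smul_eq_C_mul, mul_one] using U.smul_mem a hone
  | add p q hp hq => exact U.add_mem hp hq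
  | mul_X p i hp => exact mul_comm p (X i) ▸ hX i p hp

theorem heisenberg_irreducible_general [Semifield K] [CharZero K]
    (U : Submodule K (MvPolynomial σ K)) (hpderiv : ∀ i, ∀ p ∈ U, pderiv i p ∈ U)
    (hX : ∀ i, ∀ p ∈ U, X i * p ∈ U) (hne : U ≠ ⊥) : U = ⊤ :=
  eq_top_of_one_mem_of_X_mul_mem (one_mem_of_pderiv_mem hpderiv hne) hX

end InvariantSubspaces

theorem hOp_natCast_apply (i : ℕ+) (p : SS) : hOp (i : ℕ) p = ((i : ℕ) : ℂ) • pderiv i p := by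
  have hpos : (0 : ℤ) < (i : ℕ) := Int.natCast_pos.mpr i.pos
  have hop : hOp (i : ℕ) = (((i : ℕ) : ℤ) : ℂ) • (pderiv (R := ℂ) i).toLinearMap := dif_pos hpos
  rw [hop, Int.cast_natCast, LinearMap.smul_apply, Derivation.coeFn_coe]

theorem hOp_neg_natCast_apply (i : ℕ+) (p : SS) : hOp (-(i : ℕ)) p = X i * p := by
  have hneg : -((i : ℕ) : ℤ) < 0 := neg_lt_zero.mpr (Int.natCast_pos.mpr i.pos)
  have hindex : (- -((i : ℕ) : ℤ)).toNat = i := by rw [neg_neg, Int.toNat_natCast]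
  have hop : hOp (-(i : ℕ)) = LinearMap.mulLeft ℂ (X i) :=
    (dif_neg hneg.not_gt).trans <| (dif_pos hneg).trans <|
      congrArg (fun j : ℕ+ ↦ LinearMap.mulLeft ℂ (X j : SS)) (PNat.eq hindex)
  rw [hop, LinearMap.mulLeft_apply]

/-- The Heisenberg operators act irreducibly on `S`: any nonzero subspace invariant
under all `h(n)` is all of `S`. -/
theorem heisenberg_irreducible (U : Submodule ℂ SS)
    (hU : ∀ n : ℤ, ∀ p ∈ U, hOp n p ∈ U) (hne : U ≠ ⊥) : U = ⊤ :=
  heisenberg_irreducible_general U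
    (fun i p hp ↦ (U.smul_mem_iff (Nat.cast_ne_zero.mpr i.ne_zero)).mp
      (hOp_natCast_apply i p ▸ hU (i : ℕ) p hp))
    (fun i p hp ↦ hOp_neg_natCast_apply i p ▸ hU (-(i : ℕ)) p hp) hne
end
end

section
/- The operators L(n) on S satisfy the Virasoro relations with central charge 1: for all m, n ∈ ℤ, [L(m), L(n)] = (m−n)·L(m+n) + (1/12)·(m³−m)·δ_{m+n,0}·id_S. -/
/-!
Only two properties of the `h(n)` matter: the Heisenberg relations `[h(i), h(j)] = i δ_{i+j,0}`, and
the fact that every vector is killed by `h(k)` for large `k`, which makes the sums below finite on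
each vector. The relations give `[h(k), L(m)] = k h(m+k)`, hence by the Leibniz rule

`[L(m), h(i)h(j)] = -i h(m+i)h(j) - j h(i)h(m+j)`.

Since `h(i)h(j) = :h(i)h(j): + i⁺ δ_{i+j,0}`, replacing these three products by normally ordered
ones produces, for `m + i + j = 0`, the scalar `-(i j⁻ + j i⁺) = i⁻j⁻ - i⁺j⁺`. Summed over
`i + j = n`, the normally ordered terms recombine, after the shift `j ↦ m + j` in the first of them,
to `2(m-n) L(m+n)`. For `n = -m` the scalars add up to `∑_{0 ≤ k < m} k(m-k) = (m³-m)/6` if `m ≥ 0`,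
and their sum is odd in `m`.
-/

noncomputable section

open Filter Function MvPolynomial

attribute [local instance] LieRing.ofAssociativeRing

lemma lie_mul_eq_add {A : Type*} [Ring A] (a b c : A) : ⁅a, b * c⁆ = ⁅a, b⁆ * c + b * ⁅a, c⁆ := by
  simp only [Ring.lie_def]
  noncomm_ring

section LocallyFiniteSum

variable {R V ι : Type*} [CommRing R] [AddCommGroup V] [Module R V]

/-- The sum of a family of endomorphisms of which only finitely many are nonzero on each vector. -/
def locallyFiniteSum (T : ι → Module.End R V) (hT : ∀ v, HasFiniteSupport fun j => T j v) :
    Module.End R V where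
  toFun v := ∑ᶠ j, T j v
  map_add' v w := by simp only [map_add, finsum_add_distrib (hT v) (hT w)]
  map_smul' c v := by simp only [map_smul, smul_finsum' c (hT v), RingHom.id_apply]

lemma locallyFiniteSum_apply (T : ι → Module.End R V)
    (hT : ∀ v, HasFiniteSupport fun j => T j v) (v : V) :
    locallyFiniteSum T hT v = ∑ᶠ j, T j v :=
  rfl

lemma lie_locallyFiniteSum_apply (A : Module.End R V) (T : ι → Module.End R V)
    (hT : ∀ v, HasFiniteSupport fun j => T j v) (v : V) :
    ⁅A, locallyFiniteSum T hT⁆ v = ∑ᶠ j, ⁅A, T j⁆ v := by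
  simp only [Ring.lie_def, LinearMap.sub_apply, Module.End.mul_apply, locallyFiniteSum_apply,
    map_finsum A (hT v)]
  exact (finsum_sub_distrib ((hT v).fun_comp (map_zero A)) (hT (A v))).symm

end LocallyFiniteSum

section Heisenberg

variable {R V : Type*} [CommRing R] [AddCommGroup V] [Module R V] {h : ℤ → Module.End R V}

/-- The operators `h(n)` define a smooth level-one representation of the Heisenberg Lie algebra:
they satisfy `[h(i), h(j)] = i δ_{i+j,0}`, and `h(k)` kills any given vector for large `k`.
The central operator `h(0)` may be nonzero. -/
structure IsHeisenberg (h : ℤ → Module.End R V) : Prop where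
  lie_eq : ∀ i j, ⁅h i, h j⁆ = (if i + j = 0 then (i : R) else 0) • 1
  eventually_eq_zero : ∀ v, ∀ᶠ k in atTop, h k v = 0

/-- The normally ordered product `:h(i)h(j):` of an arbitrary family of operators; `nord` is the
case `h = hOp`. -/
def normalOrdered (h : ℤ → Module.End R V) (i j : ℤ) : Module.End R V :=
  if i ≤ j then h i * h j else h j * h i

/-- The scalar by which the commutator `[L(m), :h(i)h(j):]` differs from its normally ordered part
when `m + i + j = 0`. -/
def anomaly (i j : ℤ) : ℤ := i⁻ * j⁻ - i⁺ * j⁺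

namespace IsHeisenberg

lemma mul_eq_normalOrdered_add (hh : IsHeisenberg h) (i j : ℤ) :
    h i * h j = normalOrdered h i j + (if i + j = 0 then ((i⁺ : ℤ) : R) else 0) • 1 := by
  have hcomm : h i * h j = h j * h i + (if i + j = 0 then (i : R) else 0) • 1 := by
    rw [← hh.lie_eq, Ring.lie_def, add_sub_cancel]
  rw [normalOrdered]
  split_ifs with hij hs hs
  · rw [posPart_eq_zero.2 (by omega), Int.cast_zero, zero_smul, add_zero]
  · rw [zero_smul, add_zero]
  · rw [hcomm, if_pos hs, posPart_eq_self.2 (by omega)]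
  · rw [hcomm, if_neg hs]

lemma lie_normalOrdered (hh : IsHeisenberg h) (k i j : ℤ) :
    ⁅h k, normalOrdered h i j⁆
      = (if k + i = 0 then (k : R) else 0) • h j + (if k + j = 0 then (k : R) else 0) • h i := by
  have leibniz (a b : ℤ) : ⁅h k, h a * h b⁆
      = (if k + a = 0 then (k : R) else 0) • h b + (if k + b = 0 then (k : R) else 0) • h a := by
    rw [lie_mul_eq_add, hh.lie_eq, hh.lie_eq, smul_one_mul, mul_smul_one]
  rw [normalOrdered]
  split
  · exact leibniz i j
  · rw [leibniz j i, add_comm]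

lemma hasFiniteSupport_normalOrdered (hh : IsHeisenberg h) (n : ℤ) (v : V) :
    HasFiniteSupport fun j => normalOrdered h j (n - j) v := by
  obtain ⟨N, hN⟩ := eventually_atTop.1 (hh.eventually_eq_zero v)
  refine (Set.finite_Icc (n - N) N).subset fun j hj => ?_
  contrapose! hj
  rw [Set.mem_Icc] at hj
  rw [notMem_support, normalOrdered]
  split_ifs <;> rw [Module.End.mul_apply, hN _ (by omega), map_zero]

end IsHeisenberg

variable (h) in
lemma finsum_smul_normalOrdered_shift (m n : ℤ) (v : V) :
    ∑ᶠ j : ℤ, (j : R) • normalOrdered h (m + j) (n - j) v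
      = ∑ᶠ j : ℤ, ((j : R) - m) • normalOrdered h j (m + n - j) v := by
  rw [← finsum_comp_equiv (Equiv.addLeft m) (f := fun j => ((j : R) - m) • _)]
  refine finsum_congr fun j => ?_
  simp only [Equiv.coe_addLeft, Int.cast_add, add_sub_cancel_left, add_sub_add_left_eq_sub]

end Heisenberg

lemma six_mul_sum_range_mul_sub {R : Type*} [CommRing R] (a : R) (N : ℕ) :
    6 * ∑ k ∈ Finset.range N, (k : R) * (a - k) = N * (N - 1) * (3 * a - 2 * N + 1) := by
  induction N with
  | zero => simp
  | succ N ih =>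
    rw [Finset.sum_range_succ, mul_add, ih]
    push_cast
    ring

lemma anomaly_neg_neg (i j : ℤ) : anomaly (-i) (-j) = -anomaly i j := by
  simp only [anomaly, posPart_neg, negPart_neg, neg_sub]

lemma anomaly_of_nonpos {i j : ℤ} (hi : i ≤ 0) (hj : j ≤ 0) : anomaly i j = i * j := by
  rw [anomaly, posPart_eq_zero.2 hi, negPart_eq_neg.2 hi, negPart_eq_neg.2 hj]
  ring

lemma anomaly_of_nonpos_of_nonneg {i j : ℤ} (hi : i ≤ 0) (hj : 0 ≤ j) : anomaly i j = 0 := by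
  rw [anomaly, negPart_eq_zero.2 hj, posPart_eq_zero.2 hi, mul_zero, zero_mul, sub_zero]

lemma anomaly_of_nonneg_of_nonpos {i j : ℤ} (hi : 0 ≤ i) (hj : j ≤ 0) : anomaly i j = 0 := by
  rw [anomaly, negPart_eq_zero.2 hi, posPart_eq_zero.2 hj, mul_zero, zero_mul, sub_zero]

lemma support_anomaly_subset (n : ℤ) : support (fun j => anomaly j (n - j)) ⊆ Set.uIoo 0 n := by
  intro j hj
  contrapose! hj
  rw [Set.uIoo, Set.mem_Ioo] at hj
  rw [notMem_support]
  obtain ⟨hi, hj⟩ | ⟨hi, hj⟩ : j ≤ 0 ∧ 0 ≤ n - j ∨ 0 ≤ j ∧ n - j ≤ 0 := by omega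
  · exact anomaly_of_nonpos_of_nonneg hi hj
  · exact anomaly_of_nonneg_of_nonpos hi hj

lemma hasFiniteSupport_anomaly (n : ℤ) : HasFiniteSupport fun j => anomaly j (n - j) :=
  (Set.finite_Ioo _ _).subset (support_anomaly_subset n)

lemma finsum_anomaly_natCast (N : ℕ) :
    ∑ᶠ j : ℤ, anomaly j (-N - j) = ∑ k ∈ Finset.range N, (k : ℤ) * (N - k) := by
  rw [finsum_eq_sum_of_support_subset (s := (Finset.range N).image fun k : ℕ => -(k : ℤ)),
    Finset.sum_image fun a _ b _ hab => by simpa using hab]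
  · refine Finset.sum_congr rfl fun k hk => ?_
    rw [Finset.mem_range] at hk
    rw [anomaly_of_nonpos (by omega) (by omega)]
    ring
  · refine (support_anomaly_subset _).trans fun j hj => ?_
    rw [Set.uIoo, Set.mem_Ioo] at hj
    simp only [Finset.coe_image, Finset.coe_range, Set.mem_image, Set.mem_Iio]
    exact ⟨(-j).toNat, by omega, by omega⟩

lemma six_mul_finsum_anomaly (m : ℤ) : 6 * ∑ᶠ j : ℤ, anomaly j (-m - j) = m ^ 3 - m := by
  induction m using Int.negInduction with
  | nat N =>
    rw [finsum_anomaly_natCast, six_mul_sum_range_mul_sub]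
    ring
  | neg ih N =>
    have hodd : ∑ᶠ j : ℤ, anomaly j (- -N - j) = -∑ᶠ j : ℤ, anomaly j (-N - j) := by
      rw [← finsum_neg_distrib, ← finsum_comp_equiv (Equiv.neg ℤ)]
      refine finsum_congr fun j => ?_
      rw [← anomaly_neg_neg, Equiv.neg_apply]
      congr 1
      ring
    rw [hodd, mul_neg, ih]
    ring

section Sugawara

variable {K V : Type*} [Field K] [AddCommGroup V] [Module K V] {h : ℤ → Module.End K V}

namespace IsHeisenberg

/-- The Sugawara operator `L(n) = (1/2)∑_{j∈ℤ} :h(j)h(n−j):`. -/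
def sugawara (hh : IsHeisenberg h) (n : ℤ) : Module.End K V :=
  (1 / 2 : K) • locallyFiniteSum (fun j => normalOrdered h j (n - j))
    (hh.hasFiniteSupport_normalOrdered n)

lemma sugawara_apply (hh : IsHeisenberg h) (n : ℤ) (v : V) :
    hh.sugawara n v = (1 / 2 : K) • ∑ᶠ j, normalOrdered h j (n - j) v :=
  rfl

lemma lie_sugawara_apply (hh : IsHeisenberg h) (A : Module.End K V) (n : ℤ) (v : V) :
    ⁅A, hh.sugawara n⁆ v = (1 / 2 : K) • ∑ᶠ j, ⁅A, normalOrdered h j (n - j)⁆ v := by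
  rw [sugawara, lie_smul, LinearMap.smul_apply, lie_locallyFiniteSum_apply]

end IsHeisenberg

variable [CharZero K]

namespace IsHeisenberg

lemma lie_sugawara (hh : IsHeisenberg h) (k m : ℤ) :
    ⁅h k, hh.sugawara m⁆ = (k : K) • h (m + k) := by
  ext v
  have hterm (j : ℤ) : ⁅h k, normalOrdered h j (m - j)⁆ v
      = (if j = -k then (k : K) • h (m + k) v else 0)
        + (if j = m + k then (k : K) • h (m + k) v else 0) := by
    simp only [hh.lie_normalOrdered, show k + j = 0 ↔ j = -k by omega,
      show k + (m - j) = 0 ↔ j = m + k by omega]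
    rw [LinearMap.add_apply]
    congr 1
    · split_ifs with hj
      · rw [hj, sub_neg_eq_add, LinearMap.smul_apply]
      · rw [zero_smul, LinearMap.zero_apply]
    · split_ifs with hj
      · rw [hj, LinearMap.smul_apply]
      · rw [zero_smul, LinearMap.zero_apply]
  have hsupp (a : ℤ) : HasFiniteSupport fun j => if j = a then (k : K) • h (m + k) v else 0 :=
    (Set.finite_singleton a).subset fun j hj => (ite_ne_right_iff.1 hj).1
  rw [lie_sugawara_apply, finsum_congr hterm, finsum_add_distrib (hsupp _) (hsupp _),
    finsum_eq_single _ (-k) (fun j hj => if_neg hj),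
    finsum_eq_single _ (m + k) (fun j hj => if_neg hj), if_pos rfl, if_pos rfl,
    LinearMap.smul_apply]
  module

lemma sugawara_lie_mul (hh : IsHeisenberg h) (m i j : ℤ) :
    ⁅hh.sugawara m, h i * h j⁆ = -((i : K) • (h (m + i) * h j) + (j : K) • (h i * h (m + j))) := by
  rw [lie_mul_eq_add, ← lie_skew _ (h i), ← lie_skew _ (h j), hh.lie_sugawara, hh.lie_sugawara,
    neg_mul, mul_neg, smul_mul_assoc, mul_smul_comm, neg_add]

lemma sugawara_lie_normalOrdered (hh : IsHeisenberg h) (m i j : ℤ) :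
    ⁅hh.sugawara m, normalOrdered h i j⁆
      = -((i : K) • normalOrdered h (m + i) j + (j : K) • normalOrdered h i (m + j))
        + (if m + i + j = 0 then (anomaly i j : K) else 0) • 1 := by
  have hscalar (c : K) : ⁅hh.sugawara m, c • (1 : Module.End K V)⁆ = 0 := by
    rw [lie_smul, Ring.lie_def, mul_one, one_mul, sub_self, smul_zero]
  rw [eq_sub_of_add_eq (hh.mul_eq_normalOrdered_add i j).symm, lie_sub, hscalar, sub_zero,
    hh.sugawara_lie_mul, hh.mul_eq_normalOrdered_add, hh.mul_eq_normalOrdered_add]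
  have hanomaly : m + i + j = 0 → anomaly i j = -(i * (m + i)⁺ + j * i⁺) := by
    intro hs
    rw [eq_neg_of_add_eq_zero_left hs, posPart_neg, anomaly]
    nth_rw 3 [← posPart_sub_negPart i]
    nth_rw 4 [← posPart_sub_negPart j]
    ring
  simp only [show i + (m + j) = m + i + j by ring]
  split_ifs with hs
  · rw [hanomaly hs]
    push_cast
    module
  · module

end IsHeisenberg

lemma finsum_anomaly_smul (m n : ℤ) (v : V) :
    ∑ᶠ j, (if m + n = 0 then (anomaly j (n - j) : K) else 0) • v
      = (if m + n = 0 then (1 / 6 : K) * ((m : K) ^ 3 - m) else 0) • v := by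
  have hsum : (6 : K) * ((∑ᶠ j, anomaly j (-m - j) : ℤ) : K) = (m : K) ^ 3 - m :=
    mod_cast congrArg (Int.cast (R := K)) (six_mul_finsum_anomaly m)
  by_cases hmn : m + n = 0
  · obtain rfl : n = -m := by omega
    simp only [add_neg_cancel, if_true]
    have hcast : ((∑ᶠ j, anomaly j (-m - j) : ℤ) : K) = ∑ᶠ j, (anomaly j (-m - j) : K) :=
      map_finsum (Int.castAddHom K) (hasFiniteSupport_anomaly (-m))
    rw [← finsum_smul' ((hasFiniteSupport_anomaly (-m)).fun_comp Int.cast_zero), ← hcast, ← hsum]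
    module
  · simp [hmn]

namespace IsHeisenberg

lemma finsum_lie_normalOrdered (hh : IsHeisenberg h) (m n : ℤ) (v : V) :
    ∑ᶠ j, ⁅hh.sugawara m, normalOrdered h j (n - j)⁆ v
      = ((m : K) - n) • ∑ᶠ j, normalOrdered h j (m + n - j) v
        + ∑ᶠ j, (if m + n = 0 then (anomaly j (n - j) : K) else 0) • v := by
  have hnormal := hh.hasFiniteSupport_normalOrdered (m + n) v
  have hshifted : HasFiniteSupport fun j : ℤ => normalOrdered h (m + j) (n - j) v := by
    simpa only [add_sub_add_left_eq_sub] using hnormal.fun_comp_of_injective (add_right_injective m)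
  have hleft := hshifted.fun_smul_right fun j : ℤ => (j : K)
  have hright := hnormal.fun_smul_right fun j : ℤ => (n : K) - j
  have hcentral := (hasFiniteSupport_anomaly n).fun_comp
    (g := fun a : ℤ => (if m + n = 0 then (a : K) else 0) • v) (by simp)
  have hterm (j : ℤ) : ⁅hh.sugawara m, normalOrdered h j (n - j)⁆ v
      = -((j : K) • normalOrdered h (m + j) (n - j) v
          + ((n : K) - j) • normalOrdered h j (m + n - j) v)
        + (if m + n = 0 then (anomaly j (n - j) : K) else 0) • v := by
    rw [hh.sugawara_lie_normalOrdered, add_add_sub_cancel, ← add_sub_assoc, Int.cast_sub]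
    rfl
  have hcoeff (j : ℤ) : ((j : K) - m) • normalOrdered h j (m + n - j) v
        + ((n : K) - j) • normalOrdered h j (m + n - j) v
      = ((n : K) - m) • normalOrdered h j (m + n - j) v := by
    module
  calc ∑ᶠ j, ⁅hh.sugawara m, normalOrdered h j (n - j)⁆ v
    _ = -(∑ᶠ j : ℤ, ((j : K) - m) • normalOrdered h j (m + n - j) v
          + ∑ᶠ j : ℤ, ((n : K) - j) • normalOrdered h j (m + n - j) v)
        + ∑ᶠ j, (if m + n = 0 then (anomaly j (n - j) : K) else 0) • v := by
      rw [finsum_congr hterm, finsum_add_distrib (hleft.fun_add hright).fun_neg hcentral,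
        finsum_neg_distrib, finsum_add_distrib hleft hright, finsum_smul_normalOrdered_shift]
    _ = ((m : K) - n) • ∑ᶠ j, normalOrdered h j (m + n - j) v
        + ∑ᶠ j, (if m + n = 0 then (anomaly j (n - j) : K) else 0) • v := by
      rw [← finsum_add_distrib (hnormal.fun_smul_right _) hright, finsum_congr hcoeff,
        ← smul_finsum' _ hnormal, ← neg_smul, neg_sub]

end IsHeisenberg

theorem virasoro_relations_general (hh : IsHeisenberg h) (m n : ℤ) :
    ⁅hh.sugawara m, hh.sugawara n⁆
      = ((m : K) - n) • hh.sugawara (m + n)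
        + (if m + n = 0 then (1 / 12 : K) * ((m : K) ^ 3 - m) else 0) • 1 := by
  ext v
  rw [hh.lie_sugawara_apply, hh.finsum_lie_normalOrdered, finsum_anomaly_smul, LinearMap.add_apply,
    LinearMap.smul_apply, LinearMap.smul_apply, hh.sugawara_apply, Module.End.one_apply]
  split_ifs <;> module

end Sugawara

lemma pderiv_pderiv_comm {R σ : Type*} [CommRing R] (i j : σ) (p : MvPolynomial σ R) :
    pderiv i (pderiv j p) = pderiv j (pderiv i p) := by
  classical
  have hlie : ⁅pderiv (R := R) i, pderiv (R := R) j⁆ = 0 := derivation_ext fun k => by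
    simp [Derivation.commutator_apply, pderiv_X, Pi.single_apply, apply_ite]
  rw [← sub_eq_zero, ← Derivation.commutator_apply, hlie, Derivation.zero_apply]

lemma hOp_zero : hOp 0 = 0 := rfl

lemma hOp_coe_apply (k : ℕ+) (p : SS) : hOp k p = (k : ℂ) • pderiv k p := by
  have hdef : hOp k = ((k : ℤ) : ℂ) • (pderiv k).toLinearMap :=
    dif_pos (by exact_mod_cast k.pos)
  rw [hdef, Int.cast_natCast, LinearMap.smul_apply, Derivation.coeFn_coe]

lemma hOp_neg_coe_apply (k : ℕ+) (p : SS) : hOp (-k) p = X k * p := by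
  have hk : (0 : ℤ) < k := by exact_mod_cast k.pos
  have hindex : (⟨(- -(k : ℤ)).toNat, by omega⟩ : ℕ+) = k := PNat.coe_injective (by simp)
  have hdef : hOp (-k) = LinearMap.mulLeft ℂ (X ⟨(- -(k : ℤ)).toNat, by omega⟩) :=
    (dif_neg (by omega)).trans (dif_pos (by omega))
  rw [hdef, hindex, LinearMap.mulLeft_apply]

lemma lie_hOp_coe_coe (a b : ℕ+) : ⁅hOp a, hOp b⁆ = 0 := by
  refine LinearMap.ext fun p => ?_
  simp only [Ring.lie_def, LinearMap.sub_apply, Module.End.mul_apply, hOp_coe_apply, map_smul]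
  rw [pderiv_pderiv_comm, smul_comm, sub_self, LinearMap.zero_apply]

lemma lie_hOp_neg_coe_neg_coe (a b : ℕ+) : ⁅hOp (-a), hOp (-b)⁆ = 0 := by
  refine LinearMap.ext fun p => ?_
  simp only [Ring.lie_def, LinearMap.sub_apply, Module.End.mul_apply, hOp_neg_coe_apply]
  rw [mul_left_comm, sub_self, LinearMap.zero_apply]

lemma lie_hOp_coe_neg_coe (a b : ℕ+) :
    ⁅hOp a, hOp (-b)⁆ = (if a = b then (a : ℂ) else 0) • 1 := by
  refine LinearMap.ext fun p => ?_
  simp only [Ring.lie_def, LinearMap.sub_apply, Module.End.mul_apply, hOp_coe_apply,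
    hOp_neg_coe_apply, pderiv_mul, mul_smul_comm, smul_add, add_sub_cancel_right,
    LinearMap.smul_apply, Module.End.one_apply]
  split_ifs with hab
  · rw [hab, pderiv_X_self, one_mul]
  · rw [pderiv_X_of_ne (Ne.symm hab), zero_mul, smul_zero, zero_smul]

lemma int_eq_zero_or_eq_coe_or_eq_neg_coe (n : ℤ) :
    n = 0 ∨ (∃ k : ℕ+, n = k) ∨ ∃ k : ℕ+, n = -k := by
  rcases lt_trichotomy n 0 with hn | hn | hn
  · exact .inr (.inr ⟨⟨(-n).toNat, by omega⟩, by simp; omega⟩)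
  · exact .inl hn
  · exact .inr (.inl ⟨⟨n.toNat, by omega⟩, by simp; omega⟩)

lemma lie_hOp (i j : ℤ) : ⁅hOp i, hOp j⁆ = (if i + j = 0 then (i : ℂ) else 0) • 1 := by
  obtain rfl | ⟨a, rfl⟩ | ⟨a, rfl⟩ := int_eq_zero_or_eq_coe_or_eq_neg_coe i
  · simp [hOp_zero]
  all_goals obtain rfl | ⟨b, rfl⟩ | ⟨b, rfl⟩ := int_eq_zero_or_eq_coe_or_eq_neg_coe j
  · simp [hOp_zero]
  · have hne : (a : ℤ) + b ≠ 0 := by have := a.pos; omega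
    rw [lie_hOp_coe_coe, if_neg hne, zero_smul]
  · simp [lie_hOp_coe_neg_coe, add_neg_eq_zero]
  · simp [hOp_zero]
  · rw [← lie_skew, lie_hOp_coe_neg_coe]
    obtain rfl | hab := eq_or_ne a b
    · rw [if_pos rfl, if_pos (neg_add_cancel _), Int.cast_neg, Int.cast_natCast]
      exact (neg_smul _ _).symm
    · simp [neg_add_eq_zero, hab, hab.symm]
  · have hne : -(a : ℤ) + -b ≠ 0 := by have := a.pos; omega
    rw [lie_hOp_neg_coe_neg_coe, if_neg hne, zero_smul]

lemma eventually_hOp_apply_eq_zero (p : SS) : ∀ᶠ k in atTop, hOp k p = 0 := by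
  obtain ⟨M, hM⟩ := p.vars.bddAbove
  filter_upwards [eventually_gt_atTop (M : ℤ)] with k hk
  lift k to ℕ+ using by omega
  have hvars : k ∉ p.vars := fun hmem => (hM hmem).not_gt (by exact_mod_cast hk)
  rw [hOp_coe_apply, pderiv_eq_zero_of_notMem_vars hvars, smul_zero]

lemma isHeisenberg_hOp : IsHeisenberg hOp := ⟨lie_hOp, eventually_hOp_apply_eq_zero⟩

/-- The Virasoro relations with central charge 1:  if `L n` acts pointwise as
`p ↦ (1/2)∑_{j∈ℤ} (:h(j)h(n−j):)(p)`, then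
`[L(m), L(n)] = (m−n)L(m+n) + (1/12)(m³−m)δ_{m+n,0}·id_S`. -/
theorem virasoro_relations (L : ℤ → Module.End ℂ SS)
    (hL : ∀ (n : ℤ) (p : SS), L n p = (1 / 2 : ℂ) • ∑ᶠ j : ℤ, nord j (n - j) p)
    (m n : ℤ) :
    L m * L n - L n * L m
      = ((m : ℂ) - (n : ℂ)) • L (m + n)
        + (if m + n = 0 then (1 / 12 : ℂ) * ((m : ℂ) ^ 3 - (m : ℂ)) else 0) •
            (1 : Module.End ℂ SS) := by
  obtain rfl : L = isHeisenberg_hOp.sugawara := funext fun n => LinearMap.ext (hL n)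
  exact virasoro_relations_general isHeisenberg_hOp m n
end
end

section
/- S is the direct sum of the eigenspaces of L(0), the eigenvalues of L(0) are exactly the nonnegative integers, and for each n ∈ ℕ the eigenspace S_n = {p ∈ S : L(0)(p) = n·p} is finite-dimensional with dim_ℂ S_n equal to the number of partitions of n. (Equivalently, the graded dimension of S is ∑_{n≥0} (dim S_n)qⁿ = ∏_{n>0}(1−qⁿ)⁻¹.) -/
/-!
Normal ordering puts the derivative first, so `:h(k)h(-k):` and `:h(-k)h(k):` are both equal to
`k·aₖ·∂/∂aₖ`. Hence `L(0) = ∑_{k>0} k·aₖ·∂/∂aₖ` is the Euler operator of the grading in which `aₖ`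
has degree `k`: the monomial basis diagonalises it, with the degrees as eigenvalues. Reading the
exponent of `aₖ` as the multiplicity of the part `k` identifies the monomials of degree `n` with
the partitions of `n`.
-/

noncomputable section

section DiagonalOperator

open Module Module.End

variable {ι R M : Type*} [CommRing R] [AddCommGroup M] [Module R M]
  {b : Basis ι R M} {T : End R M} {w : ι → R}

lemma repr_apply_of_diagonal (hT : ∀ i, T (b i) = w i • b i) (v : M) (i : ι) :
    b.repr (T v) i = w i * b.repr v i := by
  have hcoord : b.coord i ∘ₗ T = w i • b.coord i := b.ext fun j => by
    obtain rfl | hij := eq_or_ne j i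
    · simp [hT]
    · simp [hT, hij]
  exact LinearMap.congr_fun hcoord v

variable [IsDomain R]

lemma eigenspace_eq_span_of_diagonal (hT : ∀ i, T (b i) = w i • b i) (μ : R) :
    eigenspace T μ = Submodule.span R (b '' {i | w i = μ}) := by
  ext v
  rw [mem_eigenspace_iff, b.mem_span_image, ← b.repr.injective.eq_iff, Finsupp.ext_iff]
  refine forall_congr' fun i => ?_
  rw [repr_apply_of_diagonal hT, map_smul, Finsupp.smul_apply, smul_eq_mul, mul_eq_mul_right_iff,
    Finset.mem_coe, Finsupp.mem_support_iff, Set.mem_ofPred_eq, or_iff_not_imp_right]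

lemma hasEigenvalue_iff_of_diagonal (hT : ∀ i, T (b i) = w i • b i) (μ : R) :
    HasEigenvalue T μ ↔ μ ∈ Set.range w := by
  rw [hasEigenvalue_iff, eigenspace_eq_span_of_diagonal hT, ne_eq, Submodule.span_eq_bot]
  simp [b.ne_zero]

lemma finrank_eigenspace_of_diagonal (hT : ∀ i, T (b i) = w i • b i) (μ : R) :
    finrank R (eigenspace T μ) = Nat.card {i // w i = μ} := by
  have hspan : Submodule.span R (b '' {i | w i = μ}) =
      Submodule.span R (Set.range fun i : {i // w i = μ} => b i) := by
    rw [Set.image_eq_range]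
    rfl
  rw [eigenspace_eq_span_of_diagonal hT, hspan]
  exact finrank_eq_nat_card_basis
    (Basis.span (b.linearIndependent.comp _ Subtype.val_injective))

lemma isInternal_eigenspace_of_diagonal [DecidableEq R] (hT : ∀ i, T (b i) = w i • b i) :
    DirectSum.IsInternal (eigenspace T) := by
  have : IsTorsionFree R M := b.isTorsionFree
  refine DirectSum.isInternal_submodule_of_iSupIndep_of_iSup_eq_top
    (eigenspaces_iSupIndep T) (top_le_iff.1 ?_)
  rw [← b.span_eq, Submodule.span_le]
  rintro _ ⟨i, rfl⟩
  exact Submodule.mem_iSup_of_mem (w i) (mem_eigenspace_iff.2 (hT i))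

end DiagonalOperator

section Finsum

variable {M : Type*} [AddCommMonoid M] {f : ℤ → M}

lemma finsum_int_eq_zero_add_pnat_add_neg (hpos : Function.HasFiniteSupport fun k : ℕ+ => f k)
    (hneg : Function.HasFiniteSupport fun k : ℕ+ => f (-k)) :
    ∑ᶠ j, f j = f 0 + (∑ᶠ k : ℕ+, f k + ∑ᶠ k : ℕ+, f (-k)) := by
  let pos : ℕ+ → ℤ := fun k => k
  let neg : ℕ+ → ℤ := fun k => -k
  have pos_injective : pos.Injective := fun k l h => by simpa [pos] using h
  have neg_injective : neg.Injective := fun k l h => by simpa [neg] using h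
  have huniv : {0} ∪ (Set.range pos ∪ Set.range neg) = Set.univ := by
    refine Set.eq_univ_of_forall fun j => ?_
    obtain h | rfl | h := lt_trichotomy j 0
    · exact .inr (.inr ⟨⟨(-j).toNat, by lia⟩, by simp only [neg, PNat.mk_coe]; lia⟩)
    · exact .inl rfl
    · exact .inr (.inl ⟨⟨j.toNat, by lia⟩, by simp only [pos, PNat.mk_coe]; lia⟩)
  have hzero : Disjoint {0} (Set.range pos ∪ Set.range neg) := by simp [pos, neg]
  have hpos_neg : Disjoint (Set.range pos) (Set.range neg) := by
    refine Set.disjoint_range_iff.2 fun k l => ?_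
    have := k.pos
    have := l.pos
    simp only [pos, neg]
    lia
  have hfin {g : ℕ+ → ℤ} (hg : Function.HasFiniteSupport fun k => f (g k)) :
      (Set.range g ∩ f.support).Finite := by
    rw [← Set.image_preimage_eq_range_inter]
    exact hg.image g
  have hfin_union : ((Set.range pos ∪ Set.range neg) ∩ f.support).Finite := by
    rw [Set.union_inter_distrib_right]
    exact (hfin hpos).union (hfin hneg)
  rw [← finsum_mem_univ, ← huniv,
    finsum_mem_union' hzero ((Set.finite_singleton 0).inter_of_left _) hfin_union,
    finsum_mem_union' hpos_neg (hfin hpos) (hfin hneg), finsum_mem_singleton,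
    finsum_mem_range pos_injective, finsum_mem_range neg_injective]

lemma finsum_int_eq_of_even (hf : f.Even) (hfin : Function.HasFiniteSupport fun k : ℕ+ => f k) :
    ∑ᶠ j, f j = f 0 + 2 • ∑ᶠ k : ℕ+, f k := by
  have hneg (k : ℕ+) : f (-k) = f k := hf k
  rw [finsum_int_eq_zero_add_pnat_add_neg hfin (by simpa only [hneg] using hfin)]
  simp only [hneg, two_nsmul]

end Finsum

lemma finsum_smul_X_mul_pderiv_monomial {σ R : Type*} [CommSemiring R] (w : σ → ℕ) (d : σ →₀ ℕ)
    (r : R) :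
    ∑ᶠ i, w i • (MvPolynomial.X i * MvPolynomial.pderiv i (MvPolynomial.monomial d r)) =
      Finsupp.weight w d • MvPolynomial.monomial d r := by
  simp only [MvPolynomial.X_mul_pderiv_monomial, smul_smul]
  rw [finsum_eq_sum_of_support_subset (s := d.support), ← Finset.sum_smul]
  · simp only [Finsupp.weight_apply, Finsupp.sum, smul_eq_mul, mul_comm]
  · intro i hi
    rw [Finset.mem_coe, Finsupp.mem_support_iff]
    intro hdi
    simp [hdi] at hi

section Partition

lemma weight_pnat_val_surjective :
    Function.Surjective (Finsupp.weight PNat.val : (ℕ+ →₀ ℕ) →+ ℕ) :=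
  fun n => ⟨Finsupp.single 1 n, by simp [Finsupp.weight_single]⟩

lemma sum_map_toMultiset {σ M : Type*} [AddCommMonoid M] (w : σ → M) (d : σ →₀ ℕ) :
    (d.toMultiset.map w).sum = Finsupp.weight w d := by
  simp [Finsupp.toMultiset_map, Finsupp.weight_apply, Finsupp.sum_mapDomain_index, add_smul]

lemma map_val_map_toPNat' {s : Multiset ℕ} (hs : ∀ k ∈ s, 0 < k) :
    (s.map Nat.toPNat').map PNat.val = s := by
  rw [Multiset.map_map]
  refine (Multiset.map_congr rfl fun k hk => ?_).trans s.map_id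
  simp [hs k hk]

/-- The exponents `d` of the monomials of degree `n`, where `aₖ` has degree `k`, correspond to the
partitions of `n`: the part `k` occurs `dₖ` times. -/
def weightEquivPartition (n : ℕ) :
    {d : ℕ+ →₀ ℕ // Finsupp.weight PNat.val d = n} ≃ n.Partition where
  toFun d :=
    { parts := d.1.toMultiset.map PNat.val
      parts_pos := fun hi => by
        obtain ⟨k, -, rfl⟩ := Multiset.mem_map.1 hi
        exact k.pos
      parts_sum := (sum_map_toMultiset _ _).trans d.2 }
  invFun p := ⟨Multiset.toFinsupp (p.parts.map Nat.toPNat'), by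
    rw [← sum_map_toMultiset, Multiset.toFinsupp_toMultiset,
      map_val_map_toPNat' fun _ => p.parts_pos, p.parts_sum]⟩
  left_inv d := by
    simp [Multiset.map_map]
  right_inv p := by
    ext1
    dsimp only
    rw [Multiset.toFinsupp_toMultiset, map_val_map_toPNat' fun _ => p.parts_pos]

end Partition

section Heisenberg

open MvPolynomial

lemma hOp_pnat (k : ℕ+) : hOp k = (k : ℂ) • (pderiv k).toLinearMap := by
  have hk : (0 : ℤ) < k := mod_cast k.pos
  exact dif_pos hk

lemma hOp_neg_pnat (k : ℕ+) : hOp (-k) = LinearMap.mulLeft ℂ (X k) := by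
  have hk : (0 : ℤ) < k := mod_cast k.pos
  have hpos : ¬ (0 : ℤ) < -k := by lia
  have hneg : -(k : ℤ) < 0 := by lia
  have hindex : (⟨(- -(k : ℤ)).toNat, by lia⟩ : ℕ+) = k := PNat.eq (by simp)
  exact (dif_neg hpos).trans ((dif_pos hneg).trans (by rw [hindex]))

lemma nord_comm (i j : ℤ) : nord i j = nord j i := by
  rcases lt_trichotomy i j with h | rfl | h
  · rw [nord, nord, if_pos h.le, if_neg h.not_ge]
  · rfl
  · rw [nord, nord, if_neg h.not_ge, if_pos h.le]

lemma nord_pnat_neg_apply (k : ℕ+) (p : SS) :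
    nord k (-k) p = (k : ℕ) • (X k * pderiv k p) := by
  have hk : (0 : ℤ) < k := mod_cast k.pos
  rw [nord, if_neg (by lia), Module.End.mul_apply, hOp_pnat, hOp_neg_pnat]
  simp only [LinearMap.smul_apply, LinearMap.mulLeft_apply, Derivation.coeFn_coe, mul_smul_comm,
    Nat.cast_smul_eq_nsmul]

lemma hasFiniteSupport_nord_pnat_neg (p : SS) :
    Function.HasFiniteSupport fun k : ℕ+ => nord k (-k) p := by
  refine p.vars.finite_toSet.subset fun k hk => ?_
  by_contra hvars
  exact hk (by simp [nord_pnat_neg_apply, pderiv_eq_zero_of_notMem_vars hvars])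

lemma finsum_nord_neg_apply (p : SS) :
    ∑ᶠ j : ℤ, nord j (-j) p = 2 • ∑ᶠ k : ℕ+, (k : ℕ) • (X k * pderiv k p) := by
  have heven : Function.Even fun j : ℤ => nord j (-j) p := fun j => by
    simp only [neg_neg, nord_comm]
  rw [finsum_int_eq_of_even heven (hasFiniteSupport_nord_pnat_neg p)]
  simp only [nord_pnat_neg_apply]
  simp [nord, hOp]

lemma L0_apply {L0 : Module.End ℂ SS}
    (hL0 : ∀ p : SS, L0 p = (1 / 2 : ℂ) • ∑ᶠ j : ℤ, nord j (-j) p) (p : SS) :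
    L0 p = ∑ᶠ k : ℕ+, (k : ℕ) • (X k * pderiv k p) := by
  rw [hL0, finsum_nord_neg_apply, ← ofNat_smul_eq_nsmul ℂ 2, smul_smul]
  norm_num

lemma L0_basisMonomials {L0 : Module.End ℂ SS}
    (hL0 : ∀ p : SS, L0 p = (1 / 2 : ℂ) • ∑ᶠ j : ℤ, nord j (-j) p) (d : ℕ+ →₀ ℕ) :
    L0 (basisMonomials ℕ+ ℂ d) = (Finsupp.weight PNat.val d : ℂ) • basisMonomials ℕ+ ℂ d := by
  rw [L0_apply hL0, coe_basisMonomials, finsum_smul_X_mul_pderiv_monomial PNat.val,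
    Nat.cast_smul_eq_nsmul]

end Heisenberg

/-- `S` is the direct sum of the eigenspaces of `L(0)`; the eigenvalues of `L(0)` are
exactly the nonnegative integers; and the eigenspace for `n` has dimension equal to the
number of partitions of `n` (so the graded dimension of `S` is `∏_{n>0}(1−qⁿ)⁻¹`). -/
theorem grading_of_S (L0 : Module.End ℂ SS)
    (hL0 : ∀ p : SS, L0 p = (1 / 2 : ℂ) • ∑ᶠ j : ℤ, nord j (-j) p) :
    DirectSum.IsInternal (fun μ : ℂ => Module.End.eigenspace L0 μ) ∧
    (∀ μ : ℂ, Module.End.HasEigenvalue L0 μ ↔ ∃ n : ℕ, μ = n) ∧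
    (∀ n : ℕ, Module.finrank ℂ (Module.End.eigenspace L0 (n : ℂ))
        = Fintype.card (Nat.Partition n)) := by
  have hdiag := L0_basisMonomials hL0
  refine ⟨isInternal_eigenspace_of_diagonal hdiag, fun μ => ?_, fun n => ?_⟩
  · rw [hasEigenvalue_iff_of_diagonal hdiag, weight_pnat_val_surjective.exists]
    simp only [Set.mem_range, eq_comm]
  · rw [finrank_eigenspace_of_diagonal hdiag]
    simp only [Nat.cast_inj]
    rw [Nat.card_congr (weightEquivPartition n), Nat.card_eq_fintype_card]
end
end

section
/- Let 𝒟⁺ be the ℂ-linear span in End_ℂ(ℂ[t,t⁻¹]) of the differential operators Dʳ∘M_{tⁿ}∘D∘Dʳ for r ∈ ℕ and n ∈ ℤ. Then 𝒟⁺ is a Lie subalgebra of End_ℂ(ℂ[t,t⁻¹]) under the commutator bracket, and 𝒟⁺ contains the operator M_{tⁿ}∘D for every n ∈ ℤ (i.e., 𝒟⁺ contains the Lie algebra of vector fields spanned by the tⁿD). -/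
noncomputable section

/-!
If `D * M a = M a * (D + χ a)`, then the generator `Dʳ M_a D Dʳ` can be written in normal order as
`M_a f(D)` with the symbol `f = X (X (X + χ a))ʳ`. Hence `M_a f(D)` lies in `𝒟⁺` as soon as `f` is
`X` times a polynomial in `X (X + χ a)`. By antisymmetry it is enough to consider the commutator of
the generators with parameters `(s, a)` and `(s + p, b)`. Its symbol is
`X (X (X + c))ˢ (F(X) + F(-(X + c)))`, where `c = χ a + χ b` and `F = Xᵖ (X + χ b)^(p + 2s + 1)`.
The elements `X` and `-(X + c)` have sum `-c` and product `-X (X + c)`, so the symmetric expression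
`F(X) + F(-(X + c))` is a polynomial in `X (X + c)`. For Laurent polynomials, `χ n = n`.
-/

/-- The span `𝒟⁺` of the elements `Dʳ * (M a * D) * Dʳ` of an algebra `E`, for a family `M` of
elements of `E` which stands for the multiplication operators `M_{tⁿ}`. -/
def Dplus (R : Type*) {E A : Type*} [CommRing R] [Ring E] [Algebra R E] (D : E) (M : A → E) :
    Submodule R E :=
  Submodule.span R {g | ∃ r : ℕ, ∃ a : A, g = D ^ r * (M a * D) * D ^ r}

namespace Dplus

open Polynomial

section SymmetricExpressions

variable {R B σ : Type*} [CommRing R] [CommRing B] [Algebra R B]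

lemma pow_add_pow_mem [SetLike σ B] [SubringClass σ B] {S : σ} {x y : B}
    (hadd : x + y ∈ S) (hmul : x * y ∈ S) (j : ℕ) : x ^ j + y ^ j ∈ S := by
  induction j using Nat.twoStepInduction with
  | zero => simpa only [pow_zero] using add_mem (one_mem S) (one_mem S)
  | one => simpa only [pow_one] using hadd
  | more j ih₀ ih₁ =>
    have newton : x ^ (j + 2) + y ^ (j + 2) =
        (x + y) * (x ^ (j + 1) + y ^ (j + 1)) - x * y * (x ^ j + y ^ j) := by ring
    rw [newton]
    exact sub_mem (mul_mem hadd ih₁) (mul_mem hmul ih₀)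

lemma aeval_add_aeval_mem {S : Subalgebra R B} {x y : B}
    (hadd : x + y ∈ S) (hmul : x * y ∈ S) (F : R[X]) : aeval x F + aeval y F ∈ S := by
  induction F using Polynomial.induction_on' with
  | add p q hp hq =>
    rw [map_add, map_add, add_add_add_comm]
    exact add_mem hp hq
  | monomial j a =>
    rw [aeval_monomial, aeval_monomial, ← mul_add]
    exact mul_mem (S.algebraMap_mem a) (pow_add_pow_mem hadd hmul j)

lemma add_aeval_neg_X_add_C_mem_adjoin (c : R) (F : R[X]) :
    F + aeval (-(X + C c)) F ∈ Algebra.adjoin R {X * (X + C c)} := by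
  have hadd : X + -(X + C c) ∈ Algebra.adjoin R {X * (X + C c)} := by
    have : X + -(X + C c) = algebraMap R R[X] (-c) := by
      rw [algebraMap_eq, C_neg]
      ring
    rw [this]
    exact Subalgebra.algebraMap_mem _ _
  have hmul : X * -(X + C c) ∈ Algebra.adjoin R {X * (X + C c)} := by
    rw [mul_neg]
    exact neg_mem (Algebra.self_mem_adjoin_singleton R _)
  simpa only [aeval_X_left_apply] using aeval_add_aeval_mem hadd hmul F

end SymmetricExpressions

section Symbols

variable {R : Type*} [CommRing R]

/-- The polynomial `f` for which the generator `Dʳ * (M a * D) * Dʳ` with `χ a = c` takes the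
normally ordered form `M a * f(D)`. -/
def symbol (c : R) (r : ℕ) : R[X] :=
  X * (X * (X + C c)) ^ r

lemma taylor_symbol (u c : R) (r : ℕ) :
    taylor u (symbol c r) = (X + C u) * ((X + C u) * (X + C u + C c)) ^ r := by
  simp only [symbol, taylor_mul, taylor_pow, taylor_X, map_add, taylor_C]

lemma neg_pow_mul_neg_pow_of_odd_add {p q : ℕ} (h : Odd (p + q)) (x y : R) :
    (-x) ^ p * (-y) ^ q = -(x ^ p * y ^ q) := by
  rw [neg_pow x, neg_pow y, mul_mul_mul_comm, ← pow_add, h.neg_one_pow, neg_one_mul]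

lemma commutator_symbol_eq (u v : R) (s p : ℕ) :
    taylor v (symbol u s) * symbol v (s + p) - taylor u (symbol v (s + p)) * symbol u s =
      X * ((X * (X + C (u + v))) ^ s * (X ^ p * (X + C v) ^ (p + 2 * s + 1) +
        aeval (-(X + C (u + v))) (X ^ p * (X + C v) ^ (p + 2 * s + 1)))) := by
  have hreflect : aeval (-(X + C (u + v))) (X ^ p * (X + C v) ^ (p + 2 * s + 1)) =
      -((X + C (u + v)) ^ p * (X + C u) ^ (p + 2 * s + 1)) := by
    have hshift : -(X + C (u + v)) + C v = -(X + C u) := by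
      rw [C_add]
      ring
    rw [← neg_pow_mul_neg_pow_of_odd_add ⟨p + s, by ring⟩, ← hshift]
    simp only [map_mul, map_pow, map_add, aeval_X, aeval_C, algebraMap_eq]
  have huv : X + C u + C v = X + C (u + v) := by rw [C_add, add_assoc]
  have hvu : X + C v + C u = X + C (u + v) := by rw [C_add, add_right_comm, add_assoc]
  rw [hreflect, taylor_symbol, taylor_symbol, symbol, symbol, huv, hvu]
  simp only [mul_pow]
  ring

lemma exists_commutator_symbol_eq_X_mul (u v : R) (s p : ℕ) :
    ∃ h ∈ Algebra.adjoin R {X * (X + C (u + v))},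
      taylor v (symbol u s) * symbol v (s + p) - taylor u (symbol v (s + p)) * symbol u s =
        X * h :=
  ⟨_, mul_mem (pow_mem (Algebra.self_mem_adjoin_singleton R _) s)
    (add_aeval_neg_X_add_C_mem_adjoin _ _), commutator_symbol_eq u v s p⟩

end Symbols

section NormalOrdering

variable {R E A : Type*} [CommRing R] [Ring E] [Algebra R E] {D : E}

lemma semiconjBy_mul_add_algebraMap {m n : E} {u v : R}
    (hm : SemiconjBy m (D + algebraMap R E u) D) (hn : SemiconjBy n (D + algebraMap R E v) D) :
    SemiconjBy (m * n) (D + algebraMap R E (u + v)) D := by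
  rw [add_comm u v, map_add, ← add_assoc]
  exact hm.mul_left (hn.add_right (Algebra.commute_algebraMap_right u n).semiconjBy)

lemma aeval_mul_of_semiconjBy {m : E} {c : R} (hm : SemiconjBy m (D + algebraMap R E c) D)
    (f : R[X]) : aeval D f * m = m * aeval D (taylor c f) := by
  rw [taylor_apply, aeval_comp, map_add, aeval_X, aeval_C]
  induction f using Polynomial.induction_on' with
  | add p q hp hq => rw [map_add, map_add, add_mul, mul_add, hp, hq]
  | monomial j a =>
    rw [aeval_monomial, aeval_monomial]
    exact ((Algebra.commute_algebraMap_right a m).semiconjBy.mul_right (hm.pow_right j)).eq.symm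

lemma generator_eq_mul_aeval_symbol {m : E} {c : R}
    (hm : SemiconjBy m (D + algebraMap R E c) D) (r : ℕ) :
    D ^ r * (m * D) * D ^ r = m * aeval D (symbol c r) := by
  have hsymbol : symbol c r = taylor c (X ^ r) * X ^ (r + 1) := by
    rw [symbol, taylor_X_pow, mul_pow]
    ring
  calc D ^ r * (m * D) * D ^ r
      = aeval D (X ^ r) * m * D ^ (r + 1) := by
        simp only [aeval_X_pow, mul_assoc, pow_succ']
    _ = m * aeval D (symbol c r) := by
        rw [aeval_mul_of_semiconjBy hm, hsymbol, map_mul, aeval_X_pow, mul_assoc]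

lemma commutator_mul_aeval {m n : E} {u v : R} (hm : SemiconjBy m (D + algebraMap R E u) D)
    (hn : SemiconjBy n (D + algebraMap R E v) D) (hmn : Commute m n) (f g : R[X]) :
    m * aeval D f * (n * aeval D g) - n * aeval D g * (m * aeval D f) =
      m * n * aeval D (taylor v f * g - taylor u g * f) := by
  have product {m n : E} {v : R} (hn : SemiconjBy n (D + algebraMap R E v) D) (f g : R[X]) :
      m * aeval D f * (n * aeval D g) = m * n * aeval D (taylor v f * g) := by
    rw [mul_assoc, ← mul_assoc (aeval D f), aeval_mul_of_semiconjBy hn, map_mul]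
    simp only [mul_assoc]
  rw [product hn, product hm, hmn.eq, map_sub, mul_sub]

variable {M : A → E}

lemma mul_aeval_symbol_mem {a : A} {c : R} (hM : SemiconjBy (M a) (D + algebraMap R E c) D)
    (r : ℕ) : M a * aeval D (symbol c r) ∈ Dplus R D M :=
  Submodule.subset_span ⟨r, a, (generator_eq_mul_aeval_symbol hM r).symm⟩

lemma mul_aeval_X_mul_mem {a : A} {c : R} (hM : SemiconjBy (M a) (D + algebraMap R E c) D)
    {h : R[X]} (hh : h ∈ Algebra.adjoin R {X * (X + C c)}) :
    M a * aeval D (X * h) ∈ Dplus R D M := by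
  obtain ⟨q, rfl⟩ := Algebra.adjoin_mem_exists_aeval R _ hh
  have hsum : X * aeval (X * (X + C c)) q =
      ∑ r ∈ Finset.range (q.natDegree + 1), q.coeff r • symbol c r := by
    simp only [aeval_eq_sum_range, Finset.mul_sum, mul_smul_comm, symbol]
  simp only [hsum, map_sum, map_smul, Finset.mul_sum, mul_smul_comm]
  exact sum_mem fun r _ => Submodule.smul_mem _ _ (mul_aeval_symbol_mem hM r)

lemma vectorField_mem (D : E) (M : A → E) (a : A) : M a * D ∈ Dplus R D M :=
  Submodule.subset_span ⟨0, a, by rw [pow_zero, one_mul, mul_one]⟩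

variable [AddCommMagma A] {χ : A → R}

lemma commutator_generator_mem (hmul : ∀ a b, M (a + b) = M a * M b)
    (hM : ∀ a, SemiconjBy (M a) (D + algebraMap R E (χ a)) D) (a b : A) (r s : ℕ) :
    D ^ r * (M a * D) * D ^ r * (D ^ s * (M b * D) * D ^ s) -
      D ^ s * (M b * D) * D ^ s * (D ^ r * (M a * D) * D ^ r) ∈ Dplus R D M := by
  wlog hrs : r ≤ s generalizing r s a b
  · rw [← neg_sub]
    exact neg_mem (this b a s r (le_of_not_ge hrs))
  obtain ⟨p, rfl⟩ := Nat.exists_eq_add_of_le hrs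
  obtain ⟨h, hh, hsymbol⟩ := exists_commutator_symbol_eq_X_mul (χ a) (χ b) r p
  have hcomm : Commute (M a) (M b) := by
    rw [commute_iff_eq, ← hmul, ← hmul, add_comm]
  have hMab : SemiconjBy (M (a + b)) (D + algebraMap R E (χ a + χ b)) D := by
    rw [hmul]
    exact semiconjBy_mul_add_algebraMap (hM a) (hM b)
  rw [generator_eq_mul_aeval_symbol (hM a), generator_eq_mul_aeval_symbol (hM b),
    commutator_mul_aeval (hM a) (hM b) hcomm, hsymbol, ← hmul]
  exact mul_aeval_X_mul_mem hMab hh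

lemma commutator_mem (hmul : ∀ a b, M (a + b) = M a * M b)
    (hM : ∀ a, SemiconjBy (M a) (D + algebraMap R E (χ a)) D) {x y : E}
    (hx : x ∈ Dplus R D M) (hy : y ∈ Dplus R D M) : x * y - y * x ∈ Dplus R D M := by
  refine LinearMap.BilinMap.apply_apply_mem_of_mem_span (Dplus R D M) _ _
    (LinearMap.mul R E - (LinearMap.mul R E).flip) ?_ x y hx hy
  rintro _ ⟨r, a, rfl⟩ _ ⟨s, b, rfl⟩
  exact commutator_generator_mem hmul hM a b r s

end NormalOrdering

section LaurentPolynomials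

open LaurentPolynomial

variable {R : Type*}

lemma mulLeft_T_add [CommSemiring R] (m n : ℤ) :
    LinearMap.mulLeft R (T (m + n) : R[T;T⁻¹]) =
      LinearMap.mulLeft R (T m) * LinearMap.mulLeft R (T n) := by
  rw [T_add, LinearMap.mulLeft_mul, Module.End.mul_eq_comp]

lemma semiconjBy_mulLeft_T [CommRing R] {D : Module.End R R[T;T⁻¹]}
    (hD : ∀ k : ℤ, D (T k) = (k : R) • T k) (n : ℤ) :
    SemiconjBy (LinearMap.mulLeft R (T n)) (D + algebraMap R (Module.End R R[T;T⁻¹]) n) D := by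
  refine LinearMap.ext fun x => ?_
  induction x using LaurentPolynomial.induction_on' with
  | add p q hp hq => rw [map_add, map_add, hp, hq]
  | C_mul_T k z =>
    rw [← LaurentPolynomial.smul_eq_C_mul, map_smul, map_smul]
    congr 1
    simp only [Module.End.mul_apply, LinearMap.add_apply, Module.algebraMap_end_apply,
      LinearMap.mulLeft_apply, hD, ← add_smul, mul_smul_comm, ← T_add, Int.cast_add,
      add_comm (k : R)]

end LaurentPolynomials

end Dplus

theorem Dplus_is_lie_subalgebra_containing_vector_fields_general
    {R E A : Type*} [CommRing R] [Ring E] [Algebra R E] [AddCommMagma A]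
    {D : E} {M : A → E} {χ : A → R} (hmul : ∀ a b, M (a + b) = M a * M b)
    (hM : ∀ a, SemiconjBy (M a) (D + algebraMap R E (χ a)) D) :
    (∀ x ∈ Dplus R D M, ∀ y ∈ Dplus R D M, x * y - y * x ∈ Dplus R D M) ∧
      ∀ a, M a * D ∈ Dplus R D M :=
  ⟨fun _ hx _ hy => Dplus.commutator_mem hmul hM hx hy, Dplus.vectorField_mem D M⟩

/-- The span `𝒟⁺` of the operators `Dʳ∘M_{tⁿ}∘D∘Dʳ` (`r ∈ ℕ`, `n ∈ ℤ`) on `ℂ[t,t⁻¹]`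
is a Lie subalgebra of `End_ℂ(ℂ[t,t⁻¹])` under the commutator bracket, and it contains
`M_{tⁿ}∘D` for every `n ∈ ℤ`. -/
theorem Dplus_is_lie_subalgebra_containing_vector_fields
    (Dop : Module.End ℂ (LaurentPolynomial ℂ))
    (hD : ∀ k : ℤ, Dop (LaurentPolynomial.T k) = (k : ℂ) • LaurentPolynomial.T k) :
    (∀ x ∈ Submodule.span ℂ
        {g : Module.End ℂ (LaurentPolynomial ℂ) | ∃ r : ℕ, ∃ n : ℤ,
          g = Dop ^ r * (LinearMap.mulLeft ℂ (LaurentPolynomial.T n) * Dop) * Dop ^ r},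
      ∀ y ∈ Submodule.span ℂ
        {g : Module.End ℂ (LaurentPolynomial ℂ) | ∃ r : ℕ, ∃ n : ℤ,
          g = Dop ^ r * (LinearMap.mulLeft ℂ (LaurentPolynomial.T n) * Dop) * Dop ^ r},
      x * y - y * x ∈ Submodule.span ℂ
        {g : Module.End ℂ (LaurentPolynomial ℂ) | ∃ r : ℕ, ∃ n : ℤ,
          g = Dop ^ r * (LinearMap.mulLeft ℂ (LaurentPolynomial.T n) * Dop) * Dop ^ r}) ∧
    (∀ n : ℤ, LinearMap.mulLeft ℂ (LaurentPolynomial.T n) * Dop ∈ Submodule.span ℂ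
        {g : Module.End ℂ (LaurentPolynomial ℂ) | ∃ r : ℕ, ∃ n : ℤ,
          g = Dop ^ r * (LinearMap.mulLeft ℂ (LaurentPolynomial.T n) * Dop) * Dop ^ r}) :=
  Dplus_is_lie_subalgebra_containing_vector_fields_general Dplus.mulLeft_T_add
    (Dplus.semiconjBy_mulLeft_T hD)
end
end
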